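/- arXiv:1504.07599 — 3 statements merged into one kernel-verified Lean document; each statement's English description precedes it below -/
import Mathlib

section
/- Let u : ℤ → ℝ and let 0 ≤ λ ≤ √2/2. Define the centered second-difference update u'_j = u_j + λ²·(u_{j+1} − 2u_j + u_{j−1}) for all j ∈ ℤ. Then ‖u'‖_TV ≤ ‖u‖_TV, i.e., the scheme is total variation diminishing. -/
/-! The total variation is an extended seminorm on sequences, invariant under translation. For
`c = λ² ≤ 1/2` the update is the convex combination of `u` and its two unit translates with weights
`1 - 2c`, `c`, `c`, so its total variation is at most `((1 - 2c) + c + c) ‖u‖_TV = ‖u‖_TV`. -/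

open scoped ENNReal

section TotalVariation

/-- The total variation `‖u‖_TV` of a doubly infinite sequence. It takes values in `[0, ∞]`, so that
the sum makes sense without a summability assumption. -/
noncomputable def totalVariation {X : Type*} [PseudoEMetricSpace X] (u : ℤ → X) : ℝ≥0∞ :=
  ∑' j, edist (u (j + 1)) (u j)

theorem totalVariation_comp_add_right {X : Type*} [PseudoEMetricSpace X] (u : ℤ → X) (k : ℤ) :
    totalVariation (fun j ↦ u (j + k)) = totalVariation u := by
  simp only [totalVariation, add_right_comm _ 1 k]
  exact (Equiv.addRight k).tsum_eq fun j ↦ edist (u (j + 1)) (u j)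

variable {E : Type*} [SeminormedAddCommGroup E]

theorem totalVariation_add_le (u v : ℤ → E) :
    totalVariation (u + v) ≤ totalVariation u + totalVariation v := by
  simp only [totalVariation, ← ENNReal.tsum_add]
  exact ENNReal.tsum_le_tsum fun j ↦ edist_add_add_le _ _ _ _

theorem totalVariation_smul {𝕜 : Type*} [SeminormedRing 𝕜] [Module 𝕜 E] [NormSMulClass 𝕜 E]
    (a : 𝕜) (u : ℤ → E) : totalVariation (a • u) = ‖a‖ₑ * totalVariation u := by
  simp only [totalVariation, Pi.smul_apply, edist_eq_enorm_sub, ← smul_sub, enorm_smul,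
    ENNReal.tsum_mul_left]

theorem second_difference_tvd_general [NormedSpace ℝ E] (u : ℤ → E) {c : ℝ}
    (hc₀ : 0 ≤ c) (hc : c ≤ 1 / 2) :
    totalVariation (fun j ↦ u j + c • (u (j + 1) - (2 : ℝ) • u j + u (j - 1))) ≤
      totalVariation u := by
  have convex_combination :
      (fun j ↦ u j + c • (u (j + 1) - (2 : ℝ) • u j + u (j - 1))) =
        (1 - 2 * c) • u + c • (fun j ↦ u (j + 1)) + c • (fun j ↦ u (j + -1)) := by
    ext j
    simp only [Pi.add_apply, Pi.smul_apply, ← sub_eq_add_neg]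
    module
  have weights_sum : ‖1 - 2 * c‖ₑ + ‖c‖ₑ + ‖c‖ₑ = 1 := by
    have hc₁ : 0 ≤ 1 - 2 * c := by linarith
    rw [Real.enorm_of_nonneg hc₁, Real.enorm_of_nonneg hc₀, ← ENNReal.ofReal_add hc₁ hc₀,
      ← ENNReal.ofReal_add (add_nonneg hc₁ hc₀) hc₀, ← ENNReal.ofReal_one]
    congr 1
    ring
  rw [convex_combination]
  calc
    _ ≤ totalVariation ((1 - 2 * c) • u) + totalVariation (c • fun j ↦ u (j + 1)) +
          totalVariation (c • fun j ↦ u (j + -1)) :=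
      (totalVariation_add_le _ _).trans (add_le_add_left (totalVariation_add_le _ _) _)
    _ = (‖1 - 2 * c‖ₑ + ‖c‖ₑ + ‖c‖ₑ) * totalVariation u := by
      simp only [totalVariation_smul, totalVariation_comp_add_right, add_mul]
    _ = totalVariation u := by rw [weights_sum, one_mul]

end TotalVariation

theorem sq_le_one_half_iff_abs_le_sqrt_two_div_two {x : ℝ} :
    x ^ 2 ≤ 1 / 2 ↔ |x| ≤ √2 / 2 := by
  have sq_half_sqrt_two : (√2 / 2) ^ 2 = 1 / 2 := by
    rw [div_pow, Real.sq_sqrt zero_le_two]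
    norm_num
  rw [← sq_half_sqrt_two, sq_le_sq, abs_of_nonneg (by positivity : 0 ≤ √2 / 2)]

/-- The centered second-difference scheme
`u'_j = u_j + λ²·(u_{j+1} − 2u_j + u_{j−1})` is total variation diminishing
for `0 ≤ λ ≤ √2/2`. -/
theorem second_difference_tvd (u u' : ℤ → ℝ) (lam : ℝ)
    (h0 : 0 ≤ lam) (h1 : lam ≤ Real.sqrt 2 / 2)
    (hu' : ∀ j : ℤ, u' j = u j + lam ^ 2 * (u (j + 1) - 2 * u j + u (j - 1))) :
    (∑' j : ℤ, ENNReal.ofReal |u' (j + 1) - u' j|) ≤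
      ∑' j : ℤ, ENNReal.ofReal |u (j + 1) - u j| := by
  have hlam : lam ^ 2 ≤ 1 / 2 :=
    sq_le_one_half_iff_abs_le_sqrt_two_div_two.2 ((abs_of_nonneg h0).trans_le h1)
  simpa only [totalVariation, edist_eq_enorm_sub, Real.enorm_eq_ofReal_abs, smul_eq_mul, ← hu']
    using second_difference_tvd_general u (sq_nonneg lam) hlam
end

section
/- Let V be a real normed vector space, F, Ḟ : V → V, Δt_FE > 0 and K > 0. Assume F satisfies the forward Euler condition and Ḟ satisfies the second derivative condition with constant K. Then the second-order Taylor series method is SSP with coefficient C = K·√(K²+2) − K²: for every v ∈ V and every Δt with 0 ≤ Δt ≤ (K·√(K²+2) − K²)·Δt_FE, one has ‖v + Δt·F(v) + (Δt²/2)·Ḟ(v)‖ ≤ ‖v‖. -/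
/-!
With `a = Δt / Δt_FE` and `b = a² / (2K²)`, the Taylor step is the combination
`(1 - a - b) v + a (v + Δt_FE F(v)) + b (v + (K Δt_FE)² Ḟ(v))` of three points at which the norm
(or any quasiconvex functional) is at most its value at `v`. The combination is convex exactly when
`a + b ≤ 1`, i.e. `(a + K²)² ≤ K² (K² + 2)`, which is the bound `a ≤ K √(K² + 2) - K²`.
-/

theorem add_smul_add_smul_mem_of_convex {𝕜 E : Type*} [Field 𝕜] [LinearOrder 𝕜]
    [IsStrictOrderedRing 𝕜] [AddCommGroup E] [Module 𝕜 E] {s : Set E} (hs : Convex 𝕜 s)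
    {v x y : E} (hv : v ∈ s) (hx : v + x ∈ s) (hy : v + y ∈ s)
    {a b : 𝕜} (ha : 0 ≤ a) (hb : 0 ≤ b) (hab : a + b ≤ 1) :
    v + a • x + b • y ∈ s := by
  obtain ⟨z, hz, hz_eq⟩ := hs.exists_mem_add_smul_eq hx hy ha hb
  have hcomb : v + a • x + b • y = (1 - (a + b)) • v + (a + b) • z := by
    rw [hz_eq]
    module
  rw [hcomb]
  exact hs hv hz (sub_nonneg.2 hab) (add_nonneg ha hb) (sub_add_cancel _ _)

theorem add_sq_div_two_mul_sq_le_one_iff {a K : ℝ} (ha : 0 ≤ a) (hK : 0 < K) :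
    a + a ^ 2 / (2 * K ^ 2) ≤ 1 ↔ a ≤ K * √(K ^ 2 + 2) - K ^ 2 := by
  calc a + a ^ 2 / (2 * K ^ 2) ≤ 1
      ↔ (a + K ^ 2) ^ 2 ≤ K ^ 2 * (K ^ 2 + 2) := by
        rw [← le_sub_iff_add_le', div_le_iff₀ (by positivity)]
        constructor <;> intro h <;> linarith
    _ ↔ (a + K ^ 2) ^ 2 ≤ (K * √(K ^ 2 + 2)) ^ 2 := by
        rw [mul_pow, Real.sq_sqrt (by positivity)]
    _ ↔ a + K ^ 2 ≤ K * √(K ^ 2 + 2) :=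
        pow_le_pow_iff_left₀ (by positivity) (by positivity) two_ne_zero
    _ ↔ a ≤ K * √(K ^ 2 + 2) - K ^ 2 := le_sub_iff_add_le.symm

theorem add_smul_add_half_sq_smul_mem_of_convex {E : Type*} [AddCommGroup E] [Module ℝ E]
    {s : Set E} (hs : Convex ℝ s) {v x y : E} {τ K t : ℝ} (hτ : 0 < τ) (hK : 0 < K)
    (hv : v ∈ s) (hx : v + τ • x ∈ s) (hy : v + (K * τ) ^ 2 • y ∈ s)
    (ht : 0 ≤ t) (hle : t ≤ (K * √(K ^ 2 + 2) - K ^ 2) * τ) :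
    v + t • x + (t ^ 2 / 2) • y ∈ s := by
  obtain ⟨a, rfl⟩ : ∃ a, t = a * τ := ⟨t / τ, (div_mul_cancel₀ t hτ.ne').symm⟩
  have ha : 0 ≤ a := nonneg_of_mul_nonneg_left ht hτ
  have hweights : a + a ^ 2 / (2 * K ^ 2) ≤ 1 :=
    (add_sq_div_two_mul_sq_le_one_iff ha hK).2 (le_of_mul_le_mul_right hle hτ)
  have hcoeff : (a * τ) ^ 2 / 2 = a ^ 2 / (2 * K ^ 2) * (K * τ) ^ 2 := by field_simp
  rw [hcoeff, mul_smul, mul_smul]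
  exact add_smul_add_smul_mem_of_convex hs hv hx hy ha (by positivity) hweights

theorem taylor_series_ssp_general {V β : Type*} [AddCommGroup V] [Module ℝ V] [Preorder β]
    {φ : V → β} (hφ : QuasiconvexOn ℝ Set.univ φ) (F Fd : V → V) {dtFE K : ℝ}
    (hdtFE : 0 < dtFE) (hK : 0 < K)
    (hFE : ∀ v, φ (v + dtFE • F v) ≤ φ v)
    (hSD : ∀ v, φ (v + (K * dtFE) ^ 2 • Fd v) ≤ φ v)
    (v : V) {dt : ℝ} (hdt : 0 ≤ dt) (hle : dt ≤ (K * √(K ^ 2 + 2) - K ^ 2) * dtFE) :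
    φ (v + dt • F v + (dt ^ 2 / 2) • Fd v) ≤ φ v := by
  have hsublevel : Convex ℝ {w | φ w ≤ φ v} := by simpa using hφ (φ v)
  exact add_smul_add_half_sq_smul_mem_of_convex hsublevel hdtFE hK le_rfl (hFE v) (hSD v) hdt hle

/-- The second-order Taylor series method
`u ↦ u + Δt·F(u) + (Δt²/2)·Ḟ(u)` is SSP with coefficient `C = K·√(K²+2) − K²`. -/
theorem taylor_series_ssp {V : Type*} [NormedAddCommGroup V] [NormedSpace ℝ V]
    (F Fd : V → V) (dtFE K : ℝ) (hdtFE : 0 < dtFE) (hK : 0 < K)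
    (hFE : ∀ v : V, ∀ t : ℝ, 0 ≤ t → t ≤ dtFE → ‖v + t • F v‖ ≤ ‖v‖)
    (hSD : ∀ v : V, ∀ t : ℝ, 0 ≤ t → t ≤ K * dtFE → ‖v + t ^ 2 • Fd v‖ ≤ ‖v‖) :
    ∀ v : V, ∀ dt : ℝ, 0 ≤ dt →
      dt ≤ (K * Real.sqrt (K ^ 2 + 2) - K ^ 2) * dtFE →
      ‖v + dt • F v + (dt ^ 2 / 2) • Fd v‖ ≤ ‖v‖ := by
  intro v dt hdt hle
  exact taylor_series_ssp_general convexOn_univ_norm.quasiconvexOn F Fd hdtFE hK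
    (fun w => hFE w dtFE hdtFE.le le_rfl)
    (fun w => hSD w (K * dtFE) (by positivity) le_rfl) v hdt hle
end

section
/- Let V be a real normed vector space, F, Ḟ : V → V, Δt_FE > 0 and K > 0. Assume F satisfies the forward Euler condition and Ḟ satisfies the second derivative condition with constant K. Set r = (1 − K² + √(1 + 6K² + K⁴))/2. Then the two-stage second-order method u* = u + (Δt/r)·F(u), u^{n+1} = u + (Δt/2)·(F(u) + F(u*)) + ((r−1)/(2r))·Δt²·Ḟ(u) satisfies ‖u^{n+1}‖ ≤ ‖u‖ for every u ∈ V and every Δt with 0 ≤ Δt ≤ r·Δt_FE. -/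
/-!
Write `Δt = r s`. The coefficient `r` is the positive root of `r (r - 1) = K² (2 - r)`, which is
exactly what makes the step the convex combination, with weights `r / 2` and `1 - r / 2`, of two
successive forward Euler steps of length `s` and of `u + (K s)² Ḟ(u)`. Both lie in the ball of
radius `‖u‖`, which is convex; the same goes for the sublevel sets of any quasiconvex functional.
-/

section Conditions

variable {R V β : Type*} [Semiring R] [AddCommMonoid V] [Module R V]

/-- One forward Euler step `v + t F(v)` of length `t`. It is both the first stage `u*` of the method
and the map bounded by the forward Euler condition. -/
def eulerStep (F : V → V) (t : R) (v : V) : V :=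
  v + t • F v

variable [PartialOrder R] [Preorder β]

/-- The forward Euler condition with step bound `τ`, for a functional `Φ` in place of the norm. -/
def ForwardEulerCondition (Φ : V → β) (F : V → V) (τ : R) : Prop :=
  ∀ v : V, ∀ t : R, 0 ≤ t → t ≤ τ → Φ (eulerStep F t v) ≤ Φ v

/-- The second derivative condition with constant `K` and forward Euler step bound `τ`, for a
functional `Φ` in place of the norm. -/
def SecondDerivativeCondition (Φ : V → β) (Fd : V → V) (K τ : R) : Prop :=
  ∀ v : V, ∀ t : R, 0 ≤ t → t ≤ K * τ → Φ (v + t ^ 2 • Fd v) ≤ Φ v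

theorem ForwardEulerCondition.eulerStep_eulerStep_le {Φ : V → β} {F : V → V} {τ s : R}
    (hF : ForwardEulerCondition Φ F τ) (hs : 0 ≤ s) (hsτ : s ≤ τ) (u : V) :
    Φ (eulerStep F s (eulerStep F s u)) ≤ Φ u :=
  (hF _ s hs hsτ).trans (hF u s hs hsτ)

end Conditions

theorem le_two_of_mul_sub_one_eq {R : Type*} [CommRing R] [LinearOrder R] [IsStrictOrderedRing R]
    {r K : R} (hr : 0 < r) (hroot : r * (r - 1) = K ^ 2 * (2 - r)) : r ≤ 2 := by
  by_contra! hlt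
  have hpos : 0 < r * (r - 1) := mul_pos hr (by linarith)
  have hnonpos : K ^ 2 * (2 - r) ≤ 0 :=
    mul_nonpos_of_nonneg_of_nonpos (sq_nonneg K) (by linarith)
  linarith

section Method

variable {𝕜 V β : Type*} [Field 𝕜] [AddCommGroup V] [Module 𝕜 V]

/-- One step `u^{n+1}` of the two-stage second-order two-derivative method, with time step `dt`
and parameter `r`. -/
def twoStageStep (F Fd : V → V) (r dt : 𝕜) (u : V) : V :=
  u + (dt / 2) • (F u + F (eulerStep F (dt / r) u)) + ((r - 1) / (2 * r) * dt ^ 2) • Fd u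

theorem twoStageStep_mul_eq [NeZero (2 : 𝕜)] {r K : 𝕜} (hr : r ≠ 0)
    (hroot : r * (r - 1) = K ^ 2 * (2 - r)) (F Fd : V → V) (s : 𝕜) (u : V) :
    twoStageStep F Fd r (r * s) u =
      (r / 2) • eulerStep F s (eulerStep F s u) + (1 - r / 2) • (u + (K * s) ^ 2 • Fd u) := by
  have hcoef : (r - 1) / (2 * r) * (r * s) ^ 2 = (1 - r / 2) * (K * s) ^ 2 := by
    have h2 : (2 : 𝕜) ≠ 0 := two_ne_zero
    field_simp
    linear_combination s ^ 2 * hroot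
  rw [twoStageStep, hcoef, mul_div_cancel_left₀ s hr, eulerStep.eq_def F s (eulerStep F s u)]
  -- Only the free-standing stage is expanded; its image under `F` stays an atom.
  generalize F (eulerStep F s u) = Fstage
  rw [eulerStep]
  module

theorem two_stage_second_order_ssp_general [LinearOrder 𝕜] [IsStrictOrderedRing 𝕜]
    [Preorder β] {Φ : V → β} (hΦ : QuasiconvexOn 𝕜 Set.univ Φ) {F Fd : V → V}
    {τ K r dt : 𝕜} (hK : 0 ≤ K)
    (hF : ForwardEulerCondition Φ F τ) (hFd : SecondDerivativeCondition Φ Fd K τ) (hr : 0 < r)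
    (hroot : r * (r - 1) = K ^ 2 * (2 - r)) (hdt : 0 ≤ dt) (hdtτ : dt ≤ r * τ) (u : V) :
    Φ (twoStageStep F Fd r dt u) ≤ Φ u := by
  obtain ⟨s, rfl⟩ : ∃ s, dt = r * s := ⟨dt / r, (mul_div_cancel₀ dt hr.ne').symm⟩
  have hs : 0 ≤ s := nonneg_of_mul_nonneg_right hdt hr
  have hsτ : s ≤ τ := le_of_mul_le_mul_left hdtτ hr
  have hEuler : Φ (eulerStep F s (eulerStep F s u)) ≤ Φ u := hF.eulerStep_eulerStep_le hs hsτ u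
  have hDeriv : Φ (u + (K * s) ^ 2 • Fd u) ≤ Φ u :=
    hFd u (K * s) (mul_nonneg hK hs) (mul_le_mul_of_nonneg_left hsτ hK)
  have hr2 : r ≤ 2 := le_two_of_mul_sub_one_eq hr hroot
  rw [twoStageStep_mul_eq hr.ne' hroot]
  exact (hΦ (Φ u) ⟨Set.mem_univ _, hEuler⟩ ⟨Set.mem_univ _, hDeriv⟩
    (by linarith) (by linarith) (by ring)).2

end Method

section Coefficient

/-- The SSP coefficient `r` of the optimal two-stage second-order method, as a function of the
constant `K` of the second derivative condition. -/
noncomputable def sspCoefficient (K : ℝ) : ℝ :=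
  (1 - K ^ 2 + Real.sqrt (1 + 6 * K ^ 2 + K ^ 4)) / 2

theorem sspCoefficient_mul_sub_one (K : ℝ) :
    sspCoefficient K * (sspCoefficient K - 1) = K ^ 2 * (2 - sspCoefficient K) := by
  have hsq := Real.sq_sqrt (show (0 : ℝ) ≤ 1 + 6 * K ^ 2 + K ^ 4 by positivity)
  rw [sspCoefficient]
  linear_combination hsq / 4

theorem sspCoefficient_pos (K : ℝ) : 0 < sspCoefficient K := by
  have hsqrt : 1 + K ^ 2 ≤ Real.sqrt (1 + 6 * K ^ 2 + K ^ 4) :=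
    Real.le_sqrt_of_sq_le (by linarith [sq_nonneg K])
  rw [sspCoefficient]
  linarith

end Coefficient

/-- The optimal two-stage second-order two-derivative method with
`r = (1 − K² + √(1 + 6K² + K⁴))/2` is SSP with coefficient `r`. -/
theorem two_stage_second_order_ssp {V : Type*} [NormedAddCommGroup V] [NormedSpace ℝ V]
    (F Fd : V → V) (dtFE K : ℝ) (hdtFE : 0 < dtFE) (hK : 0 < K)
    (hFE : ∀ v : V, ∀ t : ℝ, 0 ≤ t → t ≤ dtFE → ‖v + t • F v‖ ≤ ‖v‖)
    (hSD : ∀ v : V, ∀ t : ℝ, 0 ≤ t → t ≤ K * dtFE → ‖v + t ^ 2 • Fd v‖ ≤ ‖v‖)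
    (r : ℝ) (hr : r = (1 - K ^ 2 + Real.sqrt (1 + 6 * K ^ 2 + K ^ 4)) / 2)
    (u ustar unew : V) (dt : ℝ) (hdt0 : 0 ≤ dt) (hdt : dt ≤ r * dtFE)
    (hstar : ustar = u + (dt / r) • F u)
    (hnew : unew = u + (dt / 2) • (F u + F ustar)
      + ((r - 1) / (2 * r) * dt ^ 2) • Fd u) :
    ‖unew‖ ≤ ‖u‖ := by
  subst hr hstar hnew
  exact two_stage_second_order_ssp_general convexOn_univ_norm.quasiconvexOn hK.le hFE hSD
    (sspCoefficient_pos K) (sspCoefficient_mul_sub_one K) hdt0 hdt u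
end
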